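/- arXiv:1604.05857 — 3 statements merged into one kernel-verified Lean document; each statement's English description precedes it below -/
import Mathlib

section
/- Let p be a prime and let A = ℤ_(p)[x₁, x₂, …]/(pⁿxₙ, xₙᵖ − pxₙ₊₁ : n ≥ 1) be graded with |xₙ| = 2pⁿ. Then for each t ≥ 1, the homogeneous component of A in degree 2pt is a cyclic ℤ_(p)-module isomorphic to ℤ/p^(v_p(t)+1), where v_p is the p-adic valuation, and A is zero in positive degrees not divisible by 2p. -/
open MvPolynomial

noncomputable section

instance spanIntP_isPrime (p : ℕ) [Fact p.Prime] : (Ideal.span {(p : ℤ)}).IsPrime := by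
  rw [Ideal.span_singleton_prime (by exact_mod_cast (Fact.out : p.Prime).ne_zero)]
  exact Nat.prime_iff_prime_int.mp (Fact.out : p.Prime)

/-- `ℤ_(p)`, the integers localized at the prime `p`. -/
abbrev Zloc (p : ℕ) [Fact p.Prime] := Localization.AtPrime (Ideal.span {(p : ℤ)})

/-- The ideal of relations `p^n xₙ = 0`, `xₙ^p = p xₙ₊₁` (for `n ≥ 1`), where the
variable `X n` of the polynomial ring stands for `xₙ₊₁`. -/
def relIdeal (p : ℕ) [Fact p.Prime] : Ideal (MvPolynomial ℕ (Zloc p)) :=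
  Ideal.span
    ((Set.range fun n : ℕ => (p : MvPolynomial ℕ (Zloc p)) ^ (n + 1) * X n) ∪
     (Set.range fun n : ℕ => X n ^ p - (p : MvPolynomial ℕ (Zloc p)) * X (n + 1)))

/-- `A = ℤ_(p)[x₁, x₂, …]/(pⁿxₙ, xₙᵖ − pxₙ₊₁)`. -/
abbrev Apx (p : ℕ) [Fact p.Prime] := MvPolynomial ℕ (Zloc p) ⧸ relIdeal p

/-- The homogeneous component of `A` in degree `d`, for the grading with `|xₙ| = 2pⁿ`. -/
def Acomp (p : ℕ) [Fact p.Prime] (d : ℕ) : Submodule (Zloc p) (Apx p) :=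
  (weightedHomogeneousSubmodule (Zloc p) (fun n : ℕ => 2 * p ^ (n + 1)) d).map
    (Ideal.Quotient.mkₐ (Zloc p) (relIdeal p)).toLinearMap

/-- The `p`-adic valuation of `(p ^ i)!`. -/
def expVal (p i : ℕ) : ℕ := padicValNat p (p ^ i).factorial

/-- The weight of a monomial, when `X i` has weight `p ^ i`. -/
def wt (p : ℕ) : (ℕ →₀ ℕ) →+ ℕ := Finsupp.weight fun i => p ^ i

/-- The additive function on monomials which is `expVal p i` on `X i`. -/
def monVal (p : ℕ) : (ℕ →₀ ℕ) →+ ℕ := Finsupp.weight (expVal p)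

section Valuation

variable (p : ℕ)

lemma wt_single (i n : ℕ) : wt p (Finsupp.single i n) = n * p ^ i := by
  simp [wt, Finsupp.weight_single]

lemma monVal_single (i n : ℕ) : monVal p (Finsupp.single i n) = n * expVal p i := by
  simp [monVal, Finsupp.weight_single]

lemma weight_eq_sum_range (w : ℕ → ℕ) (a : ℕ →₀ ℕ) {N : ℕ} (hN : a.support ⊆ Finset.range N) :
    Finsupp.weight w a = ∑ i ∈ Finset.range N, a i * w i := by
  rw [Finsupp.weight_apply, Finsupp.sum_of_support_subset _ hN _ (by simp)]
  simp

lemma exists_support_subset_range (a b : ℕ →₀ ℕ) :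
    ∃ N, a.support ⊆ Finset.range N ∧ b.support ⊆ Finset.range N := by
  obtain ⟨N, hN⟩ := Finset.exists_nat_subset_range (a.support ∪ b.support)
  exact ⟨N, Finset.subset_union_left.trans hN, Finset.subset_union_right.trans hN⟩

lemma sum_digits_injective {N : ℕ} : ∀ {f g : ℕ → ℕ}, (∀ i, f i < p) → (∀ i, g i < p) →
    ∑ i ∈ Finset.range N, f i * p ^ i = ∑ i ∈ Finset.range N, g i * p ^ i →
    ∀ i < N, f i = g i := by
  induction N with
  | zero => simp
  | succ N ih =>
    intro f g hf hg h
    have key (f : ℕ → ℕ) : ∑ i ∈ Finset.range (N + 1), f i * p ^ i =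
        f 0 + p * ∑ i ∈ Finset.range N, f (i + 1) * p ^ i := by
      rw [Finset.sum_range_succ', Finset.mul_sum, add_comm]
      congr 1
      · simp
      · exact Finset.sum_congr rfl fun i _ => by ring
    rw [key, key] at h
    have hp : 0 < p := (Nat.zero_le _).trans_lt (hf 0)
    have h0 : f 0 = g 0 := by
      have := congrArg (· % p) h
      simpa [Nat.add_mul_mod_self_left, Nat.mod_eq_of_lt (hf 0), Nat.mod_eq_of_lt (hg 0)] using this
    have h1 := ih (f := fun i => f (i + 1)) (g := fun i => g (i + 1)) (fun i => hf _)
      (fun i => hg _) (Nat.eq_of_mul_eq_mul_left hp (by omega))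
    intro i hi
    cases i with
    | zero => exact h0
    | succ i => exact h1 i (by omega)

lemma eq_of_wt_eq {a b : ℕ →₀ ℕ} (ha : ∀ i, a i < p) (hb : ∀ i, b i < p)
    (h : wt p a = wt p b) : a = b := by
  obtain ⟨N, hNa, hNb⟩ := exists_support_subset_range a b
  rw [wt, weight_eq_sum_range _ a hNa, weight_eq_sum_range _ b hNb] at h
  ext i
  by_cases hi : i < N
  · exact sum_digits_injective p ha hb h i hi
  · rw [Finsupp.notMem_support_iff.mp fun h => hi (Finset.mem_range.mp (hNa h)),
      Finsupp.notMem_support_iff.mp fun h => hi (Finset.mem_range.mp (hNb h))]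

lemma expVal_zero : expVal p 0 = 0 := by simp [expVal]

variable [Fact p.Prime]

lemma expVal_succ (i : ℕ) : expVal p (i + 1) = expVal p i + p ^ i := by
  rw [expVal, pow_succ', padicValNat_factorial_mul, expVal]

lemma mul_expVal_add_one (i : ℕ) : p * expVal p i + 1 = expVal p (i + 1) := by
  induction i with
  | zero => simp [expVal_zero, expVal_succ]
  | succ i ih =>
    rw [expVal_succ p (i + 1), ← ih, ih, expVal_succ, mul_add, pow_succ', add_right_comm, ih,
      expVal_succ]

lemma padicValNat_factorial_add_le (m n : ℕ) :
    padicValNat p m.factorial + padicValNat p n.factorial ≤ padicValNat p (m + n).factorial := by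
  rw [← padicValNat.mul m.factorial_ne_zero n.factorial_ne_zero]
  exact padicValNat_dvd_iff_le (Nat.factorial_ne_zero _) |>.mp
    (pow_padicValNat_dvd.trans (Nat.factorial_mul_factorial_dvd_factorial_add m n))

lemma monVal_le (a : ℕ →₀ ℕ) : monVal p a ≤ padicValNat p (wt p a).factorial := by
  induction a using Finsupp.induction_linear with
  | zero => simp
  | add a b ha hb =>
    rw [map_add, map_add]
    exact (add_le_add ha hb).trans (padicValNat_factorial_add_le p _ _)
  | single i n =>
    rw [monVal_single, wt_single]
    induction n with
    | zero => simp
    | succ n ih =>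
      rw [add_mul, add_mul, one_mul, one_mul]
      exact (Nat.add_le_add_right ih _).trans (padicValNat_factorial_add_le p _ _)

lemma padicValNat_factorial_sum_digits {N : ℕ} : ∀ {f : ℕ → ℕ}, (∀ i, f i < p) →
    padicValNat p (∑ i ∈ Finset.range N, f i * p ^ i).factorial =
      ∑ i ∈ Finset.range N, f i * expVal p i := by
  induction N with
  | zero => simp
  | succ N ih =>
    intro f hf
    have key : ∑ i ∈ Finset.range (N + 1), f i * p ^ i =
        p * ∑ i ∈ Finset.range N, f (i + 1) * p ^ i + f 0 := by
      rw [Finset.sum_range_succ', Finset.mul_sum]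
      congr 1
      · exact Finset.sum_congr rfl fun i _ => by ring
      · simp
    rw [key, padicValNat_factorial_mul_add _ (hf 0), padicValNat_factorial_mul,
      ih (f := fun i => f (i + 1)) fun i => hf _, Finset.sum_range_succ', expVal_zero,
      ← Finset.sum_add_distrib]
    simp [expVal_succ, mul_add]

lemma monVal_eq_of_lt {a : ℕ →₀ ℕ} (ha : ∀ i, a i < p) :
    monVal p a = padicValNat p (wt p a).factorial := by
  obtain ⟨N, hN, -⟩ := exists_support_subset_range a a
  rw [wt, monVal, weight_eq_sum_range _ a hN, weight_eq_sum_range _ a hN,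
    padicValNat_factorial_sum_digits p ha]

/-- The exponent estimate behind the relation `p ^ (n + 1) * X n = 0`. -/
lemma padicValNat_add_one_le (n : ℕ) (a : ℕ →₀ ℕ) :
    padicValNat p (wt p a + p ^ n) + (monVal p a + expVal p n) ≤
      n + padicValNat p (wt p a + p ^ n).factorial := by
  have hp : 0 < p := (Fact.out : p.Prime).pos
  obtain ⟨k, hk⟩ : ∃ k, p ^ n = k + 1 := ⟨p ^ n - 1, by have := pow_pos hp n; omega⟩
  set s := wt p a with hs
  have h1 := congrArg (padicValNat p) (Nat.add_one_mul_choose_eq (s + k) k)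
  have h2 := congrArg (padicValNat p) (Nat.add_choose_mul_factorial_mul_factorial s (p ^ n))
  have hc1 : (s + k).choose k ≠ 0 := (Nat.choose_pos (by omega)).ne'
  have hc2 : (s + (k + 1)).choose (k + 1) ≠ 0 := (Nat.choose_pos (by omega)).ne'
  have hc3 : (s + p ^ n).choose (p ^ n) ≠ 0 := (Nat.choose_pos (by omega)).ne'
  rw [padicValNat.mul (by omega) hc1, add_assoc, padicValNat.mul hc2 (by omega), ← hk,
    padicValNat.prime_pow] at h1
  rw [padicValNat.mul (mul_ne_zero hc3 s.factorial_ne_zero) (Nat.factorial_ne_zero _),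
    padicValNat.mul hc3 s.factorial_ne_zero] at h2
  have := monVal_le p a
  rw [← hs] at this
  rw [expVal]
  omega

end Valuation

section Functional

variable (p : ℕ) [Fact p.Prime]

/-- The linear functional sending a monomial `a` of weight `t` to `p ^ (v_p(t!) - monVal p a)`,
and the other monomials to `0`. -/
def weightFunctional (t : ℕ) : MvPolynomial ℕ (Zloc p) →ₗ[Zloc p] Zloc p :=
  (basisMonomials ℕ (Zloc p)).constr (Zloc p) fun a =>
    if wt p a = t then (p : Zloc p) ^ (padicValNat p t.factorial - monVal p a) else 0

lemma weightFunctional_monomial (t : ℕ) (a : ℕ →₀ ℕ) (r : Zloc p) :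
    weightFunctional p t (monomial a r) = r *
      if wt p a = t then (p : Zloc p) ^ (padicValNat p t.factorial - monVal p a) else 0 := by
  have h := (basisMonomials ℕ (Zloc p)).constr_basis (Zloc p) (fun a =>
    if wt p a = t then (p : Zloc p) ^ (padicValNat p t.factorial - monVal p a) else 0) a
  have hm : monomial a r = r • basisMonomials ℕ (Zloc p) a := by simp [smul_monomial]
  rw [hm, map_smul, weightFunctional, h, smul_eq_mul]

lemma weightFunctional_mul_pow_mul_X (t n : ℕ) (a : ℕ →₀ ℕ) (r : Zloc p) :
    (p : Zloc p) ^ (padicValNat p t + 1) ∣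
      weightFunctional p t (monomial a r * ((p : MvPolynomial ℕ (Zloc p)) ^ (n + 1) * X n)) := by
  have h : monomial a r * ((p : MvPolynomial ℕ (Zloc p)) ^ (n + 1) * X n) =
      monomial (a + Finsupp.single n 1) (r * (p : Zloc p) ^ (n + 1)) := by
    rw [show (p : MvPolynomial ℕ (Zloc p)) = C (p : Zloc p) by simp, ← C_pow, X, C_mul_monomial,
      monomial_mul, mul_one]
  rw [h, weightFunctional_monomial]
  split_ifs with hw
  · rw [mul_assoc, ← pow_add]
    refine Dvd.dvd.mul_left (pow_dvd_pow _ ?_) _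
    have h1 := padicValNat_add_one_le p n a
    have h2 := monVal_le p (a + Finsupp.single n 1)
    rw [hw] at h2
    simp only [map_add, wt_single, monVal_single, one_mul] at hw h2 ⊢
    rw [hw] at h1
    omega
  · simp

lemma weightFunctional_mul_X_pow_sub (t n : ℕ) (a : ℕ →₀ ℕ) (r : Zloc p) :
    weightFunctional p t (monomial a r *
      (X n ^ p - (p : MvPolynomial ℕ (Zloc p)) * X (n + 1))) = 0 := by
  have h : monomial a r * (X n ^ p - (p : MvPolynomial ℕ (Zloc p)) * X (n + 1)) =
      monomial (a + Finsupp.single n p) r -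
        monomial (a + Finsupp.single (n + 1) 1) (r * (p : Zloc p)) := by
    rw [show (p : MvPolynomial ℕ (Zloc p)) = C (p : Zloc p) by simp, X_pow_eq_monomial, X,
      C_mul_monomial, mul_sub, monomial_mul, monomial_mul, mul_one, mul_one]
  have hw : wt p (a + Finsupp.single n p) = wt p (a + Finsupp.single (n + 1) 1) := by
    simp [wt_single, pow_succ']
  rw [h, map_sub, weightFunctional_monomial, weightFunctional_monomial, hw, sub_eq_zero]
  split_ifs with ht
  · rw [mul_assoc, ← pow_succ']
    congr 2
    have h2 := monVal_le p (a + Finsupp.single (n + 1) 1)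
    rw [ht] at h2
    have := mul_expVal_add_one p n
    simp only [map_add, monVal_single, one_mul] at h2 ⊢
    omega
  · simp

lemma dvd_weightFunctional_of_mem {f : MvPolynomial ℕ (Zloc p)} (hf : f ∈ relIdeal p) (t : ℕ) :
    (p : Zloc p) ^ (padicValNat p t + 1) ∣ weightFunctional p t f := by
  suffices ∀ q, (p : Zloc p) ^ (padicValNat p t + 1) ∣ weightFunctional p t (q * f) by
    simpa using this 1
  refine Submodule.span_induction ?_ (by simp) ?_ ?_ hf
  · rintro _ (⟨n, rfl⟩ | ⟨n, rfl⟩) q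
    · induction q using MvPolynomial.induction_on' with
      | monomial a r => exact weightFunctional_mul_pow_mul_X p t n a r
      | add a b ha hb => rw [add_mul, map_add]; exact dvd_add ha hb
    · induction q using MvPolynomial.induction_on' with
      | monomial a r => simp only [weightFunctional_mul_X_pow_sub, dvd_zero]
      | add a b ha hb => rw [add_mul, map_add]; exact dvd_add ha hb
  · intro f g _ _ hf hg q
    rw [mul_add, map_add]
    exact dvd_add (hf q) (hg q)
  · intro a f _ hf q
    rw [smul_eq_mul, ← mul_assoc]
    exact hf _

end Functional

section Component

variable (p : ℕ)

lemma weight_degree (a : ℕ →₀ ℕ) :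
    Finsupp.weight (fun n : ℕ => 2 * p ^ (n + 1)) a = 2 * p * wt p a := by
  rw [wt, Finsupp.weight_apply, Finsupp.weight_apply, Finsupp.sum, Finsupp.sum, Finset.mul_sum]
  exact Finset.sum_congr rfl fun i _ => by simp only [smul_eq_mul]; ring

variable [Fact p.Prime]

/-- The class of a monomial in `A`. -/
def monClass (a : ℕ →₀ ℕ) : Apx p := Ideal.Quotient.mk (relIdeal p) (monomial a 1)

lemma monClass_add (a b : ℕ →₀ ℕ) : monClass p (a + b) = monClass p a * monClass p b := by
  rw [monClass, monClass, monClass, ← map_mul, monomial_mul, mul_one]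

lemma pow_mul_monClass_single (n : ℕ) :
    (p : Apx p) ^ (n + 1) * monClass p (Finsupp.single n 1) = 0 := by
  have : (p : MvPolynomial ℕ (Zloc p)) ^ (n + 1) * X n ∈ relIdeal p :=
    Ideal.subset_span (Or.inl ⟨n, rfl⟩)
  simpa [monClass, X] using Ideal.Quotient.eq_zero_iff_mem.mpr this

lemma monClass_single_prime (n : ℕ) :
    monClass p (Finsupp.single n p) = p * monClass p (Finsupp.single (n + 1) 1) := by
  have : X n ^ p - (p : MvPolynomial ℕ (Zloc p)) * X (n + 1) ∈ relIdeal p :=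
    Ideal.subset_span (Or.inr ⟨n, rfl⟩)
  have h := Ideal.Quotient.eq.mpr this
  rw [X_pow_eq_monomial, map_mul, map_natCast] at h
  exact h

/-- Every monomial is a multiple of a reduced one in `A`. -/
lemma exists_reduced (a : ℕ →₀ ℕ) : ∃ b : ℕ →₀ ℕ, (∀ i, b i < p) ∧ wt p b = wt p a ∧
    ∃ k : ℕ, monClass p a = (p : Apx p) ^ k * monClass p b := by
  induction h : a.degree using Nat.strong_induction_on generalizing a with
  | _ d ih =>
    by_cases ha : ∀ i, a i < p
    · exact ⟨a, ha, rfl, 0, by simp⟩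
    · push Not at ha
      obtain ⟨i, hi⟩ := ha
      obtain ⟨c, rfl⟩ : ∃ c, a = Finsupp.single i p + c :=
        ⟨a - Finsupp.single i p, by rw [add_tsub_cancel_of_le (Finsupp.single_le_iff.mpr hi)]⟩
      have hp : 1 < p := (Fact.out : p.Prime).one_lt
      obtain ⟨b, hb, hw, k, hk⟩ := ih _ (by
        rw [← h]; simp only [map_add, Finsupp.degree_single]; omega)
        (Finsupp.single (i + 1) 1 + c) rfl
      refine ⟨b, hb, by simp [hw, wt_single, pow_succ'], k + 1, ?_⟩
      rw [monClass_add, monClass_single_prime, mul_assoc, ← monClass_add, hk, ← mul_assoc,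
        ← pow_succ']

lemma pow_mul_monClass_eq_zero {a : ℕ →₀ ℕ} (ha : wt p a ≠ 0) :
    (p : Apx p) ^ (padicValNat p (wt p a) + 1) * monClass p a = 0 := by
  have hne : a.support.Nonempty := by
    rw [Finsupp.support_nonempty_iff]
    rintro rfl
    simp at ha
  set i := a.support.min' hne with hi
  have hmem : i ∈ a.support := Finset.min'_mem _ _
  have hdvd : p ^ i ∣ wt p a := by
    rw [wt, Finsupp.weight_apply]
    refine Finset.dvd_sum fun j hj => ?_
    exact Dvd.dvd.mul_left (pow_dvd_pow _ (Finset.min'_le _ _ hj)) _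
  obtain ⟨c, hc⟩ : ∃ c, a = Finsupp.single i 1 + c :=
    ⟨a - Finsupp.single i 1, by
      rw [add_tsub_cancel_of_le (Finsupp.single_le_iff.mpr
        (Nat.one_le_iff_ne_zero.mpr (Finsupp.mem_support_iff.mp hmem)))]⟩
  obtain ⟨k, hk⟩ := Nat.exists_eq_add_of_le ((padicValNat_dvd_iff_le ha).mp hdvd)
  have : monClass p a = monClass p (Finsupp.single i 1) * monClass p c := by
    rw [← monClass_add, ← hc]
  rw [hk, this, show i + k + 1 = k + (i + 1) by ring, pow_add, mul_assoc,
    ← mul_assoc (_ ^ (i + 1)), pow_mul_monClass_single, zero_mul, mul_zero]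

lemma Acomp_le {d : ℕ} {N : Submodule (Zloc p) (Apx p)}
    (h : ∀ a, 2 * p * wt p a = d → monClass p a ∈ N) : Acomp p d ≤ N := by
  rintro _ ⟨f, hf, rfl⟩
  rw [f.as_sum, map_sum]
  refine Submodule.sum_mem _ fun a ha => ?_
  have hm : monomial a (coeff a f) = coeff a f • monomial a (1 : Zloc p) := by
    simp [smul_monomial]
  rw [hm, map_smul]
  exact N.smul_mem _ (h a (by rw [← weight_degree]; exact hf (mem_support_iff.mp ha)))

lemma monClass_mem_Acomp (a : ℕ →₀ ℕ) : monClass p a ∈ Acomp p (2 * p * wt p a) :=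
  ⟨monomial a 1, isWeightedHomogeneous_monomial _ _ _ (weight_degree p a), rfl⟩

lemma Acomp_eq_bot {d : ℕ} (hd : ¬ 2 * p ∣ d) : Acomp p d = ⊥ :=
  le_bot_iff.mp (Acomp_le p fun _ ha => absurd ⟨_, ha.symm⟩ hd)

lemma Acomp_le_span {a : ℕ →₀ ℕ} (ha : ∀ i, a i < p) :
    Acomp p (2 * p * wt p a) ≤ Submodule.span (Zloc p) {monClass p a} := by
  have hp : 0 < 2 * p := by have := (Fact.out : p.Prime).pos; omega
  refine Acomp_le p fun b hb => ?_
  obtain ⟨c, hc, hw, k, hk⟩ := exists_reduced p b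
  obtain rfl := eq_of_wt_eq p hc ha (hw.trans (Nat.eq_of_mul_eq_mul_left hp hb))
  refine Submodule.mem_span_singleton.mpr ⟨(p : Zloc p) ^ k, ?_⟩
  refine (Algebra.smul_def ((p : Zloc p) ^ k) (monClass p c)).trans ?_
  rw [hk, map_pow, map_natCast]

/-- `ℤ → ℤ_(p)/p^k` is injective modulo `p ^ k`. -/
lemma int_dvd_of_dvd_Zloc {k : ℕ} {n : ℤ} (h : (p : Zloc p) ^ k ∣ (n : Zloc p)) :
    (p : ℤ) ^ k ∣ n := by
  obtain ⟨z, hz⟩ := h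
  obtain ⟨x, y, rfl⟩ := IsLocalization.exists_mk'_eq (Ideal.span {(p : ℤ)}).primeCompl z
  have h1 : ((n * y : ℤ) : Zloc p) = ((p ^ k * x : ℤ) : Zloc p) := by
    have := IsLocalization.mk'_spec (Zloc p) x y
    simp only [eq_intCast] at this
    push_cast
    rw [hz, mul_assoc, this]
  have hinj : Function.Injective (algebraMap ℤ (Zloc p)) :=
    IsLocalization.injective _ (Ideal.primeCompl_le_nonZeroDivisors (Ideal.span {(p : ℤ)}))
  have h2 : n * y = p ^ k * x := hinj (by simpa only [eq_intCast] using h1)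
  have hy : ¬ (p : ℤ) ∣ y := fun h => y.2 (Ideal.mem_span_singleton.mpr h)
  have hcop : IsCoprime ((p : ℤ) ^ k) y :=
    ((Nat.prime_iff_prime_int.mp (Fact.out : p.Prime)).coprime_iff_not_dvd.mpr hy).pow_left
  exact hcop.dvd_of_dvd_mul_right ⟨x, h2⟩

/-- `ℤ → ℤ_(p)/p^k` is surjective. -/
lemma exists_int_dvd_sub (k : ℕ) (z : Zloc p) : ∃ n : ℤ, (p : Zloc p) ^ k ∣ z - n := by
  obtain ⟨x, y, rfl⟩ := IsLocalization.exists_mk'_eq (Ideal.span {(p : ℤ)}).primeCompl z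
  have hy : ¬ (p : ℤ) ∣ y := fun h => y.2 (Ideal.mem_span_singleton.mpr h)
  obtain ⟨u, v, huv⟩ : IsCoprime ((p : ℤ) ^ k) y :=
    ((Nat.prime_iff_prime_int.mp (Fact.out : p.Prime)).coprime_iff_not_dvd.mpr hy).pow_left
  refine ⟨x * v, IsLocalization.mk' (Zloc p) x y * u, ?_⟩
  have h1 := IsLocalization.mk'_spec (Zloc p) x y
  have h2 := congrArg (Int.cast : ℤ → Zloc p) huv
  simp only [eq_intCast] at h1
  push_cast at h2 ⊢
  linear_combination (v : Zloc p) * h1 - IsLocalization.mk' (Zloc p) x y * h2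

lemma nonempty_Acomp_addEquiv {a : ℕ →₀ ℕ} (ha : ∀ i, a i < p) (h0 : wt p a ≠ 0) :
    Nonempty (Acomp p (2 * p * wt p a) ≃+ ZMod (p ^ (padicValNat p (wt p a) + 1))) := by
  set m := padicValNat p (wt p a) + 1 with hm
  let g : Acomp p (2 * p * wt p a) := ⟨monClass p a, monClass_mem_Acomp p a⟩
  have hg : (p : Apx p) ^ m * monClass p a = 0 := pow_mul_monClass_eq_zero p h0
  let φ : ZMod (p ^ m) →+ Acomp p (2 * p * wt p a) :=
    ZMod.lift (p ^ m) ⟨(zmultiplesHom _) g, by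
      ext
      rw [zmultiplesHom_apply, AddSubgroupClass.coe_zsmul, zsmul_eq_mul]
      push_cast
      exact hg⟩
  have hφ (n : ℤ) : (φ n : Apx p) = n * monClass p a := by
    rw [← zsmul_eq_mul]
    exact congrArg Subtype.val (ZMod.lift_coe _ _ n)
  refine ⟨(AddEquiv.ofBijective φ ⟨?_, ?_⟩).symm⟩
  · rw [injective_iff_map_eq_zero]
    intro x hx
    obtain ⟨n, rfl⟩ := ZMod.intCast_surjective x
    have hn := hφ n
    rw [hx, Submodule.coe_zero] at hn
    have hmem : (n : MvPolynomial ℕ (Zloc p)) * monomial a 1 ∈ relIdeal p := by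
      rw [← Ideal.Quotient.eq_zero_iff_mem, map_mul, map_intCast]
      exact hn.symm
    have hd := dvd_weightFunctional_of_mem p hmem (wt p a)
    rw [show (n : MvPolynomial ℕ (Zloc p)) = C (n : Zloc p) by simp, C_mul_monomial, mul_one,
      weightFunctional_monomial, if_pos rfl, monVal_eq_of_lt p ha, Nat.sub_self, pow_zero,
      mul_one] at hd
    rw [ZMod.intCast_zmod_eq_zero_iff_dvd]
    exact_mod_cast int_dvd_of_dvd_Zloc p hd
  · rintro ⟨y, hy⟩
    obtain ⟨z, hz⟩ := Submodule.mem_span_singleton.mp (Acomp_le_span p ha hy)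
    replace hz := (Algebra.smul_def z (monClass p a)).symm.trans hz
    obtain ⟨n, w, hw⟩ := exists_int_dvd_sub p m z
    refine ⟨n, Subtype.ext ?_⟩
    have hw' := congrArg (algebraMap (Zloc p) (Apx p)) hw
    rw [map_sub, map_mul, map_pow, map_natCast, map_intCast] at hw'
    rw [hφ]
    linear_combination hz - hw' * monClass p a - algebraMap (Zloc p) (Apx p) w * hg

end Component

/-- For each `t ≥ 1` the homogeneous component of `A` in degree `2pt` is a cyclic
`ℤ_(p)`-module isomorphic to `ℤ/p^(v_p(t)+1)`, and `A` vanishes in positive degrees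
not divisible by `2p`. -/
theorem stmt_0 (p : ℕ) [Fact p.Prime] :
    (∀ t : ℕ, 1 ≤ t →
       Nonempty (Acomp p (2 * p * t) ≃+ ZMod (p ^ (padicValNat p t + 1)))) ∧
    (∀ d : ℕ, 0 < d → ¬ (2 * p) ∣ d → Acomp p d = ⊥) := by
  refine ⟨fun t ht => ?_, fun d _ hd => Acomp_eq_bot p hd⟩
  obtain ⟨b, hb, hw, -⟩ := exists_reduced p (Finsupp.single 0 t)
  rw [wt_single, pow_zero, mul_one] at hw
  subst hw
  exact nonempty_Acomp_addEquiv p hb (by omega)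

end
end

section
/- Let A = ku_*[ũ]/(ũ² − u²) where ku_* = ℤ[u], with augmentation ε: A → ku_*, ũ ↦ u. Then Tor^A_0(ku_*, ku_*) ≅ ku_*, Tor^A_{2j}(ku_*, ku_*) = 0 for j > 0, and Tor^A_{2j+1}(ku_*, ku_*) ≅ ku_*/(2u) for all j ≥ 0. -/
open CategoryTheory Polynomial

noncomputable section

/-- `Tor_n^B(M, N)` for `B`-modules `M`, `N`. -/
def TorGroup (B : Type) [CommRing B] (n : ℕ) (M N : ModuleCat B) : ModuleCat B :=
  ((Tor (ModuleCat B) n).obj M).obj N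

/-- `A = ku_*[ũ]/(ũ² − u²)` where `ku_* = ℤ[u]`; the outer variable `X` is `ũ` and
`C u` is `u`. -/
abbrev Aku : Type :=
  Polynomial (Polynomial ℤ) ⧸
    Ideal.span {(X : Polynomial (Polynomial ℤ)) ^ 2 - (C (X : Polynomial ℤ)) ^ 2}

/-- `ku_* = ℤ[u]` as an `A`-module via the augmentation `ε : A → ku_*`, `ũ ↦ u`,
realized as `A/(ũ − u)`. -/
abbrev kuAug : ModuleCat Aku :=
  ModuleCat.of Aku
    (Aku ⧸ Ideal.span {(Ideal.Quotient.mk _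
      ((X : Polynomial (Polynomial ℤ)) - C (X : Polynomial ℤ)) : Aku)})

/-- `ku_*/(2u)` as an `A`-module, realized as `A/(ũ − u, 2u)`. -/
abbrev kuMod2u : ModuleCat Aku :=
  ModuleCat.of Aku
    (Aku ⧸ Ideal.span
      {(Ideal.Quotient.mk _
          ((X : Polynomial (Polynomial ℤ)) - C (X : Polynomial ℤ)) : Aku),
       (Ideal.Quotient.mk _ (C (2 * (X : Polynomial ℤ))) : Aku)})

section PeriodicResolution

open MonoidalCategory

variable {R : Type} [CommRing R]

/-- Multiplication by `r`, as an endomorphism of an `R`-module. -/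
def mulEnd (M : ModuleCat.{0} R) (r : R) : M ⟶ M :=
  ModuleCat.ofHom (LinearMap.lsmul R M r)

@[simp]
lemma mulEnd_hom_apply (M : ModuleCat.{0} R) (r : R) (x : M) : (mulEnd M r).hom x = r • x := rfl

lemma mulEnd_comp_mulEnd (M : ModuleCat.{0} R) {r s : R} (h : r * s = 0) :
    mulEnd M r ≫ mulEnd M s = 0 := by
  ext x
  simp [smul_smul, h]

/-- The periodic complex `⋯ ⟶ M --a--> M --b--> M --a--> M`. -/
def periodicComplex (M : ModuleCat.{0} R) {a b : R} (h : a * b = 0) : ChainComplex (ModuleCat R) ℕ :=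
  HomologicalComplex.alternatingConst M (φ := mulEnd M b) (ψ := mulEnd M a)
    (mulEnd_comp_mulEnd M (by rw [mul_comm, h])) (mulEnd_comp_mulEnd M h)
    fun _ _ => ComplexShape.down_nat_odd_add

lemma periodicComplex_d_of_even (M : ModuleCat.{0} R) {a b : R} (h : a * b = 0) {n : ℕ}
    (hn : Even n) : (periodicComplex M h).d (n + 1) n = mulEnd M a := by
  have : ¬ Even (n + 1) := by simpa [Nat.even_add_one] using hn
  simp [periodicComplex, HomologicalComplex.alternatingConst, this]

lemma periodicComplex_d_of_odd (M : ModuleCat.{0} R) {a b : R} (h : a * b = 0) {n : ℕ}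
    (hn : Odd n) : (periodicComplex M h).d (n + 1) n = mulEnd M b := by
  have : Even (n + 1) := hn.add_one
  simp [periodicComplex, HomologicalComplex.alternatingConst, this]

/-- The augmentation of the periodic complex on `R` to `R ⧸ (a)`. -/
def periodicAugmentation {a b : R} (h : a * b = 0) :
    periodicComplex (ModuleCat.of R R) h ⟶
      (ChainComplex.single₀ (ModuleCat R)).obj (ModuleCat.of R (R ⧸ Ideal.span {a})) :=
  ((periodicComplex (ModuleCat.of R R) h).toSingle₀Equiv _).symm
    ⟨ModuleCat.ofHom (Submodule.mkQ (Ideal.span {a})), by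
      rw [periodicComplex_d_of_even _ _ (by simp)]
      ext
      change Submodule.Quotient.mk (a • (1 : R)) = 0
      rw [Submodule.Quotient.mk_eq_zero]
      simp⟩

lemma periodicAugmentation_quasiIso {a b : R} (h : a * b = 0)
    (ha : ∀ x, a * x = 0 → b ∣ x) (hb : ∀ x, b * x = 0 → a ∣ x) :
    QuasiIso (periodicAugmentation h) where
  quasiIsoAt m := by
    cases m with
    | zero =>
      rw [ChainComplex.quasiIsoAt₀_iff, ShortComplex.quasiIso_iff_of_zeros' _ rfl rfl rfl]
      constructor
      · rw [ShortComplex.moduleCat_exact_iff]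
        intro x hx
        have hx' : (Submodule.mkQ (Ideal.span {a})) x = 0 := by
          simpa [periodicAugmentation, ChainComplex.toSingle₀Equiv] using! hx
        obtain ⟨y, hy⟩ := Ideal.mem_span_singleton.1 ((Submodule.Quotient.mk_eq_zero _).1 hx')
        refine ⟨(y : R), ?_⟩
        change ((periodicComplex (ModuleCat.of R R) h).d 1 0).hom y = x
        rw [periodicComplex_d_of_even _ _ (by simp)]
        exact hy.symm
      · rw [ModuleCat.epi_iff_surjective]
        simpa [periodicAugmentation, ChainComplex.toSingle₀Equiv] using!
          Submodule.mkQ_surjective (Ideal.span {a})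
    | succ m =>
      rw [quasiIsoAt_iff_exactAt' (hL := ChainComplex.exactAt_succ_single_obj ..),
        HomologicalComplex.exactAt_iff' _ (m + 2) (m + 1) m (by simp) (by simp),
        ShortComplex.moduleCat_exact_iff]
      intro x hx
      change ((periodicComplex (ModuleCat.of R R) h).d (m + 1) m).hom x = 0 at hx
      change ∃ y, ((periodicComplex (ModuleCat.of R R) h).d (m + 2) (m + 1)).hom y = x
      rcases Nat.even_or_odd m with hm | hm
      · rw [periodicComplex_d_of_even _ _ hm] at hx
        rw [periodicComplex_d_of_odd _ _ hm.add_one]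
        obtain ⟨y, hy⟩ := ha x hx
        exact ⟨y, hy.symm⟩
      · rw [periodicComplex_d_of_odd _ _ hm] at hx
        rw [periodicComplex_d_of_even _ _ hm.add_one]
        obtain ⟨y, hy⟩ := hb x hx
        exact ⟨y, hy.symm⟩

/-- The periodic free resolution of `R ⧸ (a)` when `a` and `b` generate each other's
annihilators. -/
def periodicResolution {a b : R} (h : a * b = 0)
    (ha : ∀ x, a * x = 0 → b ∣ x) (hb : ∀ x, b * x = 0 → a ∣ x) :
    ProjectiveResolution (ModuleCat.of R (R ⧸ Ideal.span {a})) where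
  complex := periodicComplex (ModuleCat.of R R) h
  projective _ := inferInstanceAs (Projective (ModuleCat.of R R))
  π := periodicAugmentation h
  quasiIso := periodicAugmentation_quasiIso h ha hb

lemma whiskerLeft_mulEnd_comp_rightUnitor (M : ModuleCat.{0} R) (r : R) :
    M ◁ mulEnd (ModuleCat.of R R) r ≫ (ρ_ M).hom = (ρ_ M).hom ≫ mulEnd M r := by
  apply ModuleCat.MonoidalCategory.tensor_ext
  intro m s
  change (r • s) • m = r • (s • m)
  rw [smul_assoc]

/-- Tensoring the periodic complex on `R` with `M` gives the periodic complex on `M`. -/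
def tensorPeriodicComplexIso (M : ModuleCat.{0} R) {a b : R} (h : a * b = 0) :
    (((tensoringLeft (ModuleCat R)).obj M).mapHomologicalComplex _).obj
      (periodicComplex (ModuleCat.of R R) h) ≅ periodicComplex M h :=
  HomologicalComplex.Hom.isoOfComponents (fun _ => ρ_ M) (by
    rintro _ n rfl
    change (ρ_ M).hom ≫ (periodicComplex M h).d (n + 1) n =
      M ◁ (periodicComplex (ModuleCat.of R R) h).d (n + 1) n ≫ (ρ_ M).hom
    rcases Nat.even_or_odd n with hn | hn
    · rw [periodicComplex_d_of_even _ _ hn, periodicComplex_d_of_even _ _ hn]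
      exact (whiskerLeft_mulEnd_comp_rightUnitor M a).symm
    · rw [periodicComplex_d_of_odd _ _ hn, periodicComplex_d_of_odd _ _ hn]
      exact (whiskerLeft_mulEnd_comp_rightUnitor M b).symm)

/-- `Tor` against `R ⧸ (a)` is the homology of the periodic complex. -/
def torGroupIsoPeriodicHomology (M : ModuleCat.{0} R) {a b : R} (h : a * b = 0)
    (ha : ∀ x, a * x = 0 → b ∣ x) (hb : ∀ x, b * x = 0 → a ∣ x) (n : ℕ) :
    TorGroup R n M (ModuleCat.of R (R ⧸ Ideal.span {a})) ≅ (periodicComplex M h).homology n :=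
  (periodicResolution h ha hb).isoLeftDerivedObj ((tensoringLeft (ModuleCat R)).obj M) n ≪≫
    (HomologicalComplex.homologyFunctor _ _ n).mapIso (tensorPeriodicComplexIso M h)

/-- In odd degrees the homology of the periodic complex on a module killed by `a` is the
cokernel of multiplication by `b`. -/
def periodicHomologyOddIso (M : ModuleCat.{0} R) {a b : R} (h : a * b = 0)
    (hM : ∀ x : M, a • x = 0) (j : ℕ) :
    (periodicComplex M h).homology (2 * j + 1) ≅
      ModuleCat.of R (M ⧸ LinearMap.range (LinearMap.lsmul R M b)) :=
  HomologicalComplex.alternatingConstHomologyIsoOdd _ _ _ _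
      (by simp) (by simp) (by simp) ≪≫
    ShortComplex.asIsoHomologyι _ (by ext x; exact hM x) ≪≫
    ShortComplex.moduleCatOpcyclesIso _

lemma periodicHomology_even_subsingleton (M : ModuleCat.{0} R) {a b : R} (h : a * b = 0)
    (hM : ∀ x : M, b • x = 0 → x = 0) {j : ℕ} (hj : 0 < j) :
    Subsingleton ((periodicComplex M h).homology (2 * j)) := by
  obtain ⟨k, rfl⟩ : ∃ k, j = k + 1 := ⟨j - 1, by omega⟩
  have hex : (periodicComplex M h).ExactAt (2 * k + 1 + 1) := by
    rw [HomologicalComplex.exactAt_iff' _ (2 * k + 1 + 2) (2 * k + 1 + 1) (2 * k + 1)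
      (by simp) (by simp), ShortComplex.moduleCat_exact_iff]
    intro x hx
    refine ⟨0, ?_⟩
    change ((periodicComplex M h).d (2 * k + 1 + 1) (2 * k + 1)).hom x = 0 at hx
    rw [periodicComplex_d_of_odd _ _ (by simp)] at hx
    rw [map_zero]
    exact (hM x hx).symm
  exact ModuleCat.isZero_iff_subsingleton.1 hex.isZero_homology

/-- `Tor_0` is the tensor product. -/
def torGroupZeroIso (M N : ModuleCat.{0} R) : TorGroup R 0 M N ≅ M ⊗ N :=
  ((tensoringLeft (ModuleCat R)).obj M).leftDerivedZeroIsoSelf.app N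

end PeriodicResolution

section Quotients

variable {R : Type} [CommRing R]

lemma smul_quotient_span_singleton (a : R) (x : R ⧸ Ideal.span {a}) : a • x = 0 := by
  obtain ⟨x, rfl⟩ := Ideal.Quotient.mk_surjective x
  exact Ideal.Quotient.eq_zero_iff_mem.2 (Ideal.mem_span_singleton.2 (dvd_mul_right a x))

/-- `R ⧸ I ⊗ R ⧸ I ≅ R ⧸ I`. -/
def quotientTensorSelfEquiv (I : Ideal R) :
    TensorProduct R (R ⧸ I) (R ⧸ I) ≃ₗ[R] R ⧸ I :=
  TensorProduct.quotTensorEquivQuotSMul (R ⧸ I) I ≪≫ₗ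
    Submodule.quotEquivOfEqBot _ (by
      rw [eq_bot_iff, Submodule.smul_le]
      intro r hr x _
      obtain ⟨x, rfl⟩ := Ideal.Quotient.mk_surjective x
      exact Ideal.Quotient.eq_zero_iff_mem.2 (I.mul_mem_right x hr))

/-- The cokernel of multiplication by `a + c` on `R ⧸ (a)` is `R ⧸ (a, c)`. -/
def quotientSpanSingletonCokerEquiv (a c : R) :
    ((R ⧸ Ideal.span {a}) ⧸
        LinearMap.range (LinearMap.lsmul R (R ⧸ Ideal.span {a}) (a + c))) ≃ₗ[R]
      R ⧸ Ideal.span {a, c} :=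
  have hle : Ideal.span {a} ≤ Ideal.span {a, c} := Ideal.span_mono (by simp)
  Submodule.quotEquivOfEq _ (LinearMap.ker (Submodule.factor hle)) (by
    ext x
    obtain ⟨x, rfl⟩ := Submodule.Quotient.mk_surjective _ x
    rw [LinearMap.mem_ker, ← Submodule.mkQ_apply, Submodule.factor_mk, Submodule.mkQ_apply,
      Submodule.mkQ_apply, Submodule.Quotient.mk_eq_zero, Ideal.mem_span_pair]
    constructor
    · rintro ⟨y, hy⟩
      obtain ⟨y, rfl⟩ := Submodule.Quotient.mk_surjective _ y
      change Submodule.Quotient.mk ((a + c) * y) = _ at hy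
      rw [Submodule.Quotient.eq, Ideal.mem_span_singleton] at hy
      obtain ⟨z, hz⟩ := hy
      exact ⟨y - z, y, by linear_combination hz⟩
    · rintro ⟨y, z, hyz⟩
      refine ⟨Submodule.Quotient.mk z, ?_⟩
      change Submodule.Quotient.mk ((a + c) * z) = _
      rw [Submodule.Quotient.eq, Ideal.mem_span_singleton]
      exact ⟨z - y, by linear_combination hyz⟩) ≪≫ₗ
  LinearMap.quotKerEquivOfSurjective _ (Submodule.factor_surjective hle)

/-- `Tor` of `R ⧸ (a)` with itself, when `a` and `a + c` generate each other's annihilators and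
`a + c` is regular on `R ⧸ (a)`. -/
theorem torGroup_quotient_span_singleton {a c : R} (h : a * (a + c) = 0)
    (ha : ∀ x, a * x = 0 → a + c ∣ x) (hb : ∀ x, (a + c) * x = 0 → a ∣ x)
    (hac : ∀ x, a ∣ (a + c) * x → a ∣ x) :
    Nonempty (TorGroup R 0 (ModuleCat.of R (R ⧸ Ideal.span {a}))
      (ModuleCat.of R (R ⧸ Ideal.span {a})) ≅ ModuleCat.of R (R ⧸ Ideal.span {a})) ∧
    (∀ j : ℕ, 0 < j → Subsingleton (TorGroup R (2 * j) (ModuleCat.of R (R ⧸ Ideal.span {a}))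
      (ModuleCat.of R (R ⧸ Ideal.span {a})))) ∧
    (∀ j : ℕ, Nonempty (TorGroup R (2 * j + 1) (ModuleCat.of R (R ⧸ Ideal.span {a}))
      (ModuleCat.of R (R ⧸ Ideal.span {a})) ≅ ModuleCat.of R (R ⧸ Ideal.span {a, c}))) := by
  refine ⟨⟨torGroupZeroIso _ _ ≪≫ (quotientTensorSelfEquiv _).toModuleIso⟩, fun j hj => ?_,
    fun j => ⟨torGroupIsoPeriodicHomology _ h ha hb _ ≪≫
      periodicHomologyOddIso _ h (smul_quotient_span_singleton _) j ≪≫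
      (quotientSpanSingletonCokerEquiv _ _).toModuleIso⟩⟩
  have := periodicHomology_even_subsingleton (ModuleCat.of R (R ⧸ Ideal.span {a})) h (by
    intro x hx
    obtain ⟨x, rfl⟩ := Submodule.Quotient.mk_surjective _ x
    change Submodule.Quotient.mk ((a + c) * x) = 0 at hx
    rw [Submodule.Quotient.mk_eq_zero, Ideal.mem_span_singleton] at hx
    exact (Submodule.Quotient.mk_eq_zero _).2 (Ideal.mem_span_singleton.2 (hac x hx))) hj
  exact (torGroupIsoPeriodicHomology _ h ha hb _).toLinearEquiv.toEquiv.subsingleton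

end Quotients

section Aku

/-- `ũ − u` in `A`. -/
abbrev akuSub : Aku := Ideal.Quotient.mk _ ((X : Polynomial (Polynomial ℤ)) - C (X : Polynomial ℤ))

/-- `ũ + u` in `A`. -/
abbrev akuAdd : Aku := Ideal.Quotient.mk _ ((X : Polynomial (Polynomial ℤ)) + C (X : Polynomial ℤ))

lemma aku_mk_eq_zero_iff (p : Polynomial (Polynomial ℤ)) :
    (Ideal.Quotient.mk _ p : Aku) = 0 ↔
      (X - C (X : Polynomial ℤ)) * (X + C (X : Polynomial ℤ)) ∣ p := by
  rw [Ideal.Quotient.eq_zero_iff_mem, Ideal.mem_span_singleton]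
  ring_nf

lemma akuSub_mul_akuAdd : akuSub * akuAdd = 0 := by
  rw [← map_mul, aku_mk_eq_zero_iff]

lemma akuAdd_dvd_of_akuSub_mul_eq_zero (x : Aku) (hx : akuSub * x = 0) : akuAdd ∣ x := by
  obtain ⟨p, rfl⟩ := Ideal.Quotient.mk_surjective x
  rw [← map_mul, aku_mk_eq_zero_iff] at hx
  exact map_dvd _ ((mul_dvd_mul_iff_left (X_sub_C_ne_zero _)).1 hx)

lemma akuSub_dvd_of_akuAdd_mul_eq_zero (x : Aku) (hx : akuAdd * x = 0) : akuSub ∣ x := by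
  obtain ⟨p, rfl⟩ := Ideal.Quotient.mk_surjective x
  rw [← map_mul, aku_mk_eq_zero_iff, mul_comm (X - C _)] at hx
  exact map_dvd _ ((mul_dvd_mul_iff_left (X_add_C_ne_zero _)).1 hx)

lemma akuSub_dvd_of_dvd_akuAdd_mul (x : Aku) (hx : akuSub ∣ akuAdd * x) : akuSub ∣ x := by
  obtain ⟨p, rfl⟩ := Ideal.Quotient.mk_surjective x
  obtain ⟨y, hy⟩ := hx
  obtain ⟨q, rfl⟩ := Ideal.Quotient.mk_surjective y
  rw [← sub_eq_zero, ← map_mul, ← map_mul, ← map_sub, aku_mk_eq_zero_iff] at hy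
  refine map_dvd _ (dvd_iff_isRoot.2 ?_)
  obtain ⟨r, hr⟩ := hy
  have key := congrArg (eval (X : Polynomial ℤ)) hr
  simp only [eval_sub, eval_mul, eval_add, eval_X, eval_C, sub_self, zero_mul, sub_zero,
    ← two_mul] at key
  simpa using key

lemma akuAdd_eq :
    akuAdd = akuSub + (Ideal.Quotient.mk _ (C (2 * (X : Polynomial ℤ))) : Aku) := by
  rw [← map_add, two_mul, C_add]
  ring_nf

end Aku

/-- For `A = ku_*[ũ]/(ũ² − u²)` with augmentation `ũ ↦ u`:
`Tor^A_0(ku_*, ku_*) ≅ ku_*`, `Tor^A_{2j}(ku_*, ku_*) = 0` for `j > 0`, and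
`Tor^A_{2j+1}(ku_*, ku_*) ≅ ku_*/(2u)` for all `j ≥ 0`. -/
theorem stmt_6 :
    Nonempty (TorGroup Aku 0 kuAug kuAug ≅ kuAug) ∧
    (∀ j : ℕ, 0 < j → Subsingleton (TorGroup Aku (2 * j) kuAug kuAug)) ∧
    (∀ j : ℕ, Nonempty (TorGroup Aku (2 * j + 1) kuAug kuAug ≅ kuMod2u)) := by
  refine torGroup_quotient_span_singleton (R := Aku) ?_ ?_ ?_ ?_ <;> rw [← akuAdd_eq]
  · exact akuSub_mul_akuAdd
  · exact akuAdd_dvd_of_akuSub_mul_eq_zero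
  · exact akuSub_dvd_of_akuAdd_mul_eq_zero
  · exact akuSub_dvd_of_dvd_akuAdd_mul

end
end

section
/- Let p be a prime and define ỹ_t for t ≥ 1 with p-adic expansion t = t₀ + t₁p + ⋯ + t_n pⁿ by ỹ_t = ỹ₁^{t₀} ỹ_p^{t₁} ⋯ ỹ_{pⁿ}^{t_n} in the ring A = ℤ_(p)[x₁, x₂, …]/(pⁿxₙ, xₙᵖ − pxₙ₊₁), where ỹ_{p^v} is interpreted as the generator in degree 2p^{v+1}. Then the annihilator of ỹ_t in A is (p^{v_p(t)+1}), i.e., p^{v_p(t)+1} ỹ_t = 0 and p^{v_p(t)} ỹ_t ≠ 0. -/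
open MvPolynomial

noncomputable section

/-- `ỹ_t = ∏_v ỹ_{p^v}^{t_v}` where `t = Σ t_v p^v` is the `p`-adic expansion and
`ỹ_{p^v} = x_{v+1}` is the variable `X v`; the `v`-th digit of `t` is `t / p^v % p`. -/
def ytil (p : ℕ) [Fact p.Prime] (t : ℕ) : Apx p :=
  Ideal.Quotient.mk (relIdeal p)
    (∏ v ∈ Finset.range (t + 1), X v ^ (t / p ^ v % p))

open scoped Nat

/-- The canonical map from the localization `ℤ_(p)` to the `p`-adic integers. -/
def zlocToPadicInt (p : ℕ) [Fact p.Prime] : Zloc p →+* ℤ_[p] :=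
  IsLocalization.lift (M := (Ideal.span {(p : ℤ)}).primeCompl) (g := Int.castRingHom ℤ_[p]) <| by
    rintro ⟨y, hy⟩
    have hy' : ¬ (p : ℤ) ∣ y := fun h => hy (Ideal.mem_span_singleton.mpr h)
    rw [PadicInt.isUnit_iff]
    refine le_antisymm (PadicInt.norm_le_one _) (not_lt.mp fun h => hy' ?_)
    exact (PadicInt.norm_intCast_lt_one_iff).mp h

/-- The divided power algebra over `ℤ_[p]` on one generator, as the algebra of polynomials
over `ℚ_[p]` whose `m`-th coefficient lies in `(1 / m!) ℤ_[p]`. -/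
def dividedPowers (p : ℕ) [Fact p.Prime] : Subalgebra ℤ_[p] (Polynomial ℚ_[p]) where
  carrier := {f | ∀ m, (m ! : ℚ_[p]) * f.coeff m ∈ PadicInt.subring p}
  mul_mem' := by
    intro f g hf hg m
    rw [Polynomial.coeff_mul, Finset.mul_sum]
    refine sum_mem fun ⟨a, b⟩ hab => ?_
    obtain rfl := Finset.HasAntidiagonal.mem_antidiagonal.mp hab
    have h : (((a + b)! : ℕ) : ℚ_[p]) * (f.coeff a * g.coeff b) =
        ((a + b).choose b : ℚ_[p]) * ((a ! * f.coeff a) * (b ! * g.coeff b)) := by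
      rw [← Nat.add_choose_mul_factorial_mul_factorial a b]
      push_cast
      ring
    rw [h]
    exact mul_mem (natCast_mem _ _) (mul_mem (hf a) (hg b))
  add_mem' := by
    intro f g hf hg m
    rw [Polynomial.coeff_add, mul_add]
    exact add_mem (hf m) (hg m)
  algebraMap_mem' := by
    intro r m
    rw [Polynomial.algebraMap_apply, Polynomial.coeff_C]
    split_ifs
    · exact mul_mem (natCast_mem _ _) r.2
    · simp

theorem mem_dividedPowers {p : ℕ} [Fact p.Prime] {f : Polynomial ℚ_[p]} :
    f ∈ dividedPowers p ↔ ∀ m, (m ! : ℚ_[p]) * f.coeff m ∈ PadicInt.subring p :=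
  Iff.rfl

theorem monomial_mem_dividedPowers {p : ℕ} [Fact p.Prime] {m : ℕ} {a : ℚ_[p]}
    (h : (m ! : ℚ_[p]) * a ∈ PadicInt.subring p) :
    Polynomial.monomial m a ∈ dividedPowers p := by
  intro k
  rw [Polynomial.coeff_monomial]
  split_ifs with hk
  · exact hk ▸ h
  · simp

theorem natCast_coe_dividedPowers (p : ℕ) [Fact p.Prime] (n : ℕ) :
    ((n : dividedPowers p) : Polynomial ℚ_[p]) = n :=
  map_natCast (dividedPowers p).val n

/-- The `p`-adic valuation `1 + p + ⋯ + p^(n-1)` of `(p^n)!`. -/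
def primePowFactorialVal (p n : ℕ) : ℕ := ∑ i ∈ Finset.range n, p ^ i

theorem primePowFactorialVal_succ (p n : ℕ) :
    primePowFactorialVal p (n + 1) = p * primePowFactorialVal p n + 1 := by
  simp [primePowFactorialVal, Finset.sum_range_succ', Finset.mul_sum, pow_succ']

theorem padicValNat_factorial_primePow (p : ℕ) [Fact p.Prime] (n : ℕ) :
    padicValNat p (p ^ n)! = primePowFactorialVal p n := by
  induction n with
  | zero => simp [primePowFactorialVal]
  | succ n ih =>
    rw [pow_succ', padicValNat_factorial_mul, ih, primePowFactorialVal, primePowFactorialVal,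
      Finset.sum_range_succ]

theorem factorial_mul_inv_pow_mem (p : ℕ) [Fact p.Prime] (n : ℕ) :
    (((p ^ n)! : ℕ) : ℚ_[p]) * ((p : ℚ_[p]) ^ primePowFactorialVal p n)⁻¹ ∈
      PadicInt.subring p := by
  have hp : (p : ℚ_[p]) ≠ 0 := by exact_mod_cast (Fact.out : p.Prime).ne_zero
  obtain ⟨u, hu⟩ : p ^ primePowFactorialVal p n ∣ (p ^ n)! :=
    padicValNat_factorial_primePow p n ▸ pow_padicValNat_dvd
  rw [hu, Nat.cast_mul, Nat.cast_pow, mul_right_comm, mul_inv_cancel₀ (pow_ne_zero _ hp), one_mul]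
  exact natCast_mem _ _

/-- The generator `x^(p^n) / p^(1 + p + ⋯ + p^(n-1))` of the divided power algebra. -/
def dividedGen (p : ℕ) [Fact p.Prime] (n : ℕ) : dividedPowers p :=
  ⟨Polynomial.monomial (p ^ n) ((p : ℚ_[p]) ^ primePowFactorialVal p n)⁻¹,
    monomial_mem_dividedPowers (factorial_mul_inv_pow_mem p n)⟩

/-- The map to the divided power algebra that sends the variables to the generators. -/
def toDividedPowers (p : ℕ) [Fact p.Prime] : MvPolynomial ℕ (Zloc p) →+* dividedPowers p :=
  eval₂Hom ((algebraMap ℤ_[p] (dividedPowers p)).comp (zlocToPadicInt p)) (dividedGen p)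

theorem toDividedPowers_X (p : ℕ) [Fact p.Prime] (n : ℕ) :
    toDividedPowers p (X n) = dividedGen p n :=
  eval₂Hom_X' _ _ _

theorem dividedGen_pow (p : ℕ) [Fact p.Prime] (n : ℕ) :
    dividedGen p n ^ p = (p : dividedPowers p) * dividedGen p (n + 1) := by
  have hp : (p : ℚ_[p]) ≠ 0 := by exact_mod_cast (Fact.out : p.Prime).ne_zero
  apply Subtype.ext
  simp only [dividedGen, SubmonoidClass.coe_pow, MulMemClass.coe_mul, natCast_coe_dividedPowers,
    Polynomial.monomial_pow]
  rw [← Polynomial.C_eq_natCast, Polynomial.C_mul_monomial, primePowFactorialVal_succ, ← pow_succ]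
  congr 1
  rw [pow_succ, mul_inv, inv_pow, ← pow_mul, mul_comm p]
  field_simp

theorem dividedGen_zero_coe (p : ℕ) [Fact p.Prime] :
    (dividedGen p 0 : Polynomial ℚ_[p]) = Polynomial.X := by
  simp [dividedGen, primePowFactorialVal, Polynomial.X]

theorem pow_mul_dividedGen_mem (p : ℕ) [Fact p.Prime] (n : ℕ) :
    (p : dividedPowers p) ^ (n + 1) * dividedGen p n ∈
      Ideal.span {(p : dividedPowers p) * dividedGen p 0} := by
  induction n with
  | zero => simp
  | succ n ih =>
    have hp : p - 1 + 1 = p := Nat.sub_add_cancel (Fact.out : p.Prime).one_le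
    have h : (p : dividedPowers p) ^ (n + 1 + 1) * dividedGen p (n + 1) =
        dividedGen p n ^ (p - 1) * ((p : dividedPowers p) ^ (n + 1) * dividedGen p n) := by
      rw [mul_left_comm, ← pow_succ, hp, dividedGen_pow]
      ring
    rw [h]
    exact Ideal.mul_mem_left _ _ ih

theorem relIdeal_le_comap (p : ℕ) [Fact p.Prime] :
    relIdeal p ≤ (Ideal.span {(p : dividedPowers p) * dividedGen p 0}).comap
      (toDividedPowers p) := by
  refine Ideal.span_le.mpr ?_
  rintro _ (⟨n, rfl⟩ | ⟨n, rfl⟩)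
  · simpa [toDividedPowers_X] using pow_mul_dividedGen_mem p n
  · simp [toDividedPowers_X, dividedGen_pow]

theorem sum_digits_mul_pow (p t N : ℕ) :
    ∑ v ∈ Finset.range N, p ^ v * (t / p ^ v % p) + p ^ N * (t / p ^ N) = t := by
  induction N with
  | zero => simp
  | succ N ih =>
    rw [Finset.sum_range_succ, pow_succ, ← Nat.div_div_eq_div_mul, add_assoc, mul_assoc,
      ← mul_add, Nat.mod_add_div, ih]

theorem sum_digits_mul_primePowFactorialVal (p t N : ℕ) :
    ∑ v ∈ Finset.range N, primePowFactorialVal p v * (t / p ^ v % p) +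
      primePowFactorialVal p N * (t / p ^ N) = ∑ i ∈ Finset.Ico 1 (N + 1), t / p ^ i := by
  induction N with
  | zero => simp [primePowFactorialVal]
  | succ N ih =>
    have h := Nat.mod_add_div (t / p ^ N) p
    rw [Finset.sum_Ico_succ_top (by omega), ← ih, Finset.sum_range_succ, primePowFactorialVal_succ,
      pow_succ, ← Nat.div_div_eq_div_mul]
    linear_combination primePowFactorialVal p N * h

theorem padicValNat_factorial_eq_sum_digits (p : ℕ) [Fact p.Prime] (t : ℕ) :
    padicValNat p t ! =
      ∑ v ∈ Finset.range (t + 1), primePowFactorialVal p v * (t / p ^ v % p) := by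
  have hp : 1 < p := (Fact.out : p.Prime).one_lt
  have ht : t / p ^ (t + 1) = 0 :=
    Nat.div_eq_of_lt ((Nat.lt_succ_self t).trans (Nat.lt_pow_self hp))
  have h := sum_digits_mul_primePowFactorialVal p t (t + 1)
  rw [ht, mul_zero, add_zero] at h
  rw [h, padicValNat_factorial]
  exact (Nat.log_le_self p t).trans_lt (by omega)

theorem toDividedPowers_prod_digits (p : ℕ) [Fact p.Prime] (t : ℕ) :
    (toDividedPowers p (∏ v ∈ Finset.range (t + 1), X v ^ (t / p ^ v % p)) :
      Polynomial ℚ_[p]) = Polynomial.monomial t ((p : ℚ_[p]) ^ padicValNat p t !)⁻¹ := by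
  have hp : 1 < p := (Fact.out : p.Prime).one_lt
  have ht : t / p ^ (t + 1) = 0 :=
    Nat.div_eq_of_lt ((Nat.lt_succ_self t).trans (Nat.lt_pow_self hp))
  have hsum := sum_digits_mul_pow p t (t + 1)
  rw [ht, mul_zero, add_zero] at hsum
  have key : ∀ s : Finset ℕ, ∏ v ∈ s, (dividedGen p v : Polynomial ℚ_[p]) ^ (t / p ^ v % p) =
      Polynomial.monomial (∑ v ∈ s, p ^ v * (t / p ^ v % p))
        ((p : ℚ_[p]) ^ ∑ v ∈ s, primePowFactorialVal p v * (t / p ^ v % p))⁻¹ := by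
    intro s
    induction s using Finset.induction_on with
    | empty => simp
    | insert a s ha ih =>
      rw [Finset.prod_insert ha, Finset.sum_insert ha, Finset.sum_insert ha, ih, dividedGen,
        Polynomial.monomial_pow, Polynomial.monomial_mul_monomial, inv_pow, ← pow_mul, pow_add,
        mul_inv]
  have h := key (Finset.range (t + 1))
  rw [hsum, ← padicValNat_factorial_eq_sum_digits] at h
  rw [← h]
  simp [toDividedPowers_X]

theorem pow_mul_monomial_not_mem (p : ℕ) [Fact p.Prime] {t : ℕ} (ht : 1 ≤ t)
    {f : dividedPowers p}
    (hf : (f : Polynomial ℚ_[p]) = Polynomial.monomial t ((p : ℚ_[p]) ^ padicValNat p t !)⁻¹) :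
    (p : dividedPowers p) ^ padicValNat p t * f ∉
      Ideal.span {(p : dividedPowers p) * dividedGen p 0} := by
  have hp : (p : ℚ_[p]) ≠ 0 := by exact_mod_cast (Fact.out : p.Prime).ne_zero
  intro hmem
  obtain ⟨g, hg⟩ := Ideal.mem_span_singleton.mp hmem
  obtain ⟨s, rfl⟩ : ∃ s, t = s + 1 := ⟨t - 1, by omega⟩
  obtain ⟨u, hu⟩ : p ^ padicValNat p (s + 1)! ∣ (s + 1)! := pow_padicValNat_dvd
  obtain ⟨w, hw⟩ : p ^ padicValNat p (s + 1) ∣ s + 1 := pow_padicValNat_dvd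
  have hpu : ¬ p ∣ u := by
    rintro ⟨c, rfl⟩
    refine pow_succ_padicValNat_not_dvd (p := p) (Nat.factorial_ne_zero (s + 1)) ⟨c, ?_⟩
    rw [pow_succ, mul_assoc, ← hu]
  have hcoeff : (p : ℚ_[p]) ^ padicValNat p (s + 1) * ((p : ℚ_[p]) ^ padicValNat p (s + 1)!)⁻¹ =
      p * (g : Polynomial ℚ_[p]).coeff s := by
    have h := congrArg (fun q : dividedPowers p => (q : Polynomial ℚ_[p]).coeff (s + 1)) hg
    simp only [MulMemClass.coe_mul, SubmonoidClass.coe_pow, natCast_coe_dividedPowers,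
      dividedGen_zero_coe, hf] at h
    rwa [← Polynomial.C_eq_natCast, ← Polynomial.C_pow, Polynomial.coeff_C_mul,
      Polynomial.coeff_monomial_same, mul_assoc, Polynomial.coeff_C_mul,
      Polynomial.coeff_X_mul] at h
  have hu' : (u : ℚ_[p]) = p * (w * (s ! * (g : Polynomial ℚ_[p]).coeff s)) := by
    have h1 : ((s + 1)! : ℚ_[p]) = (p : ℚ_[p]) ^ padicValNat p (s + 1)! * u := by
      exact_mod_cast congrArg (Nat.cast (R := ℚ_[p])) hu
    have h2 : ((s + 1)! : ℚ_[p]) = (p : ℚ_[p]) ^ padicValNat p (s + 1) * w * s ! := by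
      have := congrArg (fun k : ℕ => ((k * s ! : ℕ) : ℚ_[p])) hw
      rw [Nat.factorial_succ]
      simpa using this
    refine mul_left_cancel₀ (pow_ne_zero (padicValNat p (s + 1)) hp) ?_
    calc _ = (p : ℚ_[p]) ^ padicValNat p (s + 1) * ((p : ℚ_[p]) ^ padicValNat p (s + 1)!)⁻¹ *
          ((p : ℚ_[p]) ^ padicValNat p (s + 1)! * u) := by field_simp
      _ = _ := by
        rw [hcoeff, ← h1, h2]
        ring
  have hz : (w : ℚ_[p]) * (s ! * (g : Polynomial ℚ_[p]).coeff s) ∈ PadicInt.subring p :=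
    mul_mem (natCast_mem _ _) (mem_dividedPowers.mp g.2 s)
  have hdvd : (p : ℤ_[p]) ∣ (u : ℤ_[p]) := by
    obtain ⟨z, hz'⟩ : ∃ z : ℤ_[p], (z : ℚ_[p]) = w * (s ! * (g : Polynomial ℚ_[p]).coeff s) :=
      ⟨⟨_, hz⟩, rfl⟩
    refine ⟨z, PadicInt.ext ?_⟩
    simpa [hz'] using hu'
  apply hpu
  have := PadicInt.norm_lt_one_iff_dvd (u : ℤ_[p]) |>.mpr hdvd
  exact_mod_cast (PadicInt.norm_intCast_lt_one_iff (z := (u : ℤ))).mp (by simpa using this)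

/-- The annihilator of `ỹ_t` in `A` is `(p^(v_p(t)+1))`: `p^(v_p(t)+1) ỹ_t = 0` and
`p^(v_p(t)) ỹ_t ≠ 0`. -/
theorem stmt_16 (p : ℕ) [Fact p.Prime] (t : ℕ) (ht : 1 ≤ t) :
    (p : Apx p) ^ (padicValNat p t + 1) * ytil p t = 0 ∧
    (p : Apx p) ^ (padicValNat p t) * ytil p t ≠ 0 := by
  constructor
  · set v := padicValNat p t with hv
    have hvt : v ∈ Finset.range (t + 1) :=
      Finset.mem_range.mpr (Nat.lt_succ_of_le
        ((padicValNat_le_nat_log t).trans (Nat.log_le_self p t)))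
    have hdigit : t / p ^ v % p ≠ 0 := by
      intro h
      refine pow_succ_padicValNat_not_dvd (p := p) (n := t) (by omega) ?_
      rw [← hv, pow_succ]
      exact (Nat.dvd_div_iff_mul_dvd pow_padicValNat_dvd).mp (Nat.dvd_of_mod_eq_zero h)
    rw [ytil, ← map_natCast (Ideal.Quotient.mk (relIdeal p)), ← map_pow, ← map_mul,
      Ideal.Quotient.eq_zero_iff_mem]
    have hgen : (p : MvPolynomial ℕ (Zloc p)) ^ (v + 1) * X v ∈ relIdeal p :=
      Ideal.subset_span (Or.inl ⟨v, rfl⟩)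
    refine Ideal.mem_of_dvd _ (mul_dvd_mul_left _ ?_) hgen
    exact (dvd_pow_self _ hdigit).trans
      (Finset.dvd_prod_of_mem (fun v => (X v : MvPolynomial ℕ (Zloc p)) ^ (t / p ^ v % p)) hvt)
  · rw [ytil, ← map_natCast (Ideal.Quotient.mk (relIdeal p)), ← map_pow, ← map_mul, Ne,
      Ideal.Quotient.eq_zero_iff_mem]
    intro h
    have hmem := relIdeal_le_comap p h
    rw [Ideal.mem_comap, map_mul, map_pow, map_natCast] at hmem
    exact pow_mul_monomial_not_mem p ht (toDividedPowers_prod_digits p t) hmem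

end
end
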